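/- arXiv:2307.07038 — 3 statements merged into one kernel-verified Lean document; each statement's English description precedes it below -/
import Mathlib

section
/- Assume the growth conditions (GC) and that A(x) is nonempty for every x ∈ X. Let u, v : X → ℝ be Borel measurable functions with ‖u‖_W < ∞ and ‖v‖_W < ∞. Then Tu(x) and Tv(x) are finite real numbers for every x ∈ X, and ‖Tu − Tv‖_W ≤ γ·‖u − v‖_W, where γ = αβ < 1; that is, T is a contraction with modulus γ in the weighted norm ‖·‖_W. -/
open MeasureTheory ProbabilityTheory
open scoped ENNReal

/-- The weighted norm `‖u‖_W = sup_x |u x| / W x`, valued in `ℝ≥0∞`. -/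
noncomputable def WNorm {X : Type*} (W u : X → ℝ) : ℝ≥0∞ :=
  ⨆ x, ENNReal.ofReal (|u x| / W x)

/-- The dynamic programming (Bellman) operator
`Tu(x) = inf_{a ∈ A(x)} [C(x,a) + α ∫ u dQ(·|x,a)]`. -/
noncomputable def Tbell {X A : Type*} [MeasurableSpace X] [MeasurableSpace A]
    (Adm : X → Set A) (Q : Kernel (X × A) X) (C : X × A → ℝ) (α : ℝ)
    (u : X → ℝ) (x : X) : ℝ :=
  sInf ((fun a => C (x, a) + α * ∫ y, u y ∂(Q (x, a))) '' Adm x)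

/-!
Since `|u| ≤ ‖u‖_W W`, integrating against `Q(·|x,a)` gives
`|∫ u dQ(·|x,a)| ≤ ‖u‖_W ∫ W dQ(·|x,a) ≤ β ‖u‖_W W(x)`, uniformly in `a`. For `u` and `v` this
bounds the objectives below; for `u - v` it says that the two objectives differ by at most
`αβ ‖u - v‖_W W(x)`, and taking infima over the same set of actions does not increase a uniform
distance.
-/

section WeightedNorm

variable {X : Type*} {W u v : X → ℝ}

theorem WNorm_le_iff (hW : ∀ x, 0 < W x) {c : ℝ≥0∞} :
    WNorm W u ≤ c ↔ ∀ x, ‖u x‖ₑ ≤ c * ENNReal.ofReal (W x) := by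
  refine iSup_le_iff.trans (forall_congr' fun x => ?_)
  rw [ENNReal.ofReal_div_of_pos (hW x), ← Real.enorm_eq_ofReal_abs,
    ENNReal.div_le_iff (ENNReal.ofReal_pos.2 (hW x)).ne' ENNReal.ofReal_ne_top]

variable [MeasurableSpace X] {μ : Measure X}

theorem lintegral_enorm_le_WNorm_mul (hW : ∀ x, 0 < W x) (hWm : AEMeasurable W μ) :
    ∫⁻ x, ‖u x‖ₑ ∂μ ≤ WNorm W u * ∫⁻ x, ENNReal.ofReal (W x) ∂μ :=
  calc ∫⁻ x, ‖u x‖ₑ ∂μ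
      ≤ ∫⁻ x, WNorm W u * ENNReal.ofReal (W x) ∂μ :=
        lintegral_mono ((WNorm_le_iff hW).1 le_rfl)
    _ = WNorm W u * ∫⁻ x, ENNReal.ofReal (W x) ∂μ :=
        lintegral_const_mul'' _ hWm.ennreal_ofReal

theorem integrable_of_WNorm_lt_top (hW : ∀ x, 0 < W x) (hWm : AEMeasurable W μ)
    (hWμ : ∫⁻ x, ENNReal.ofReal (W x) ∂μ < ⊤) (hu : AEStronglyMeasurable u μ)
    (huW : WNorm W u < ⊤) : Integrable u μ :=
  ⟨hu, (lintegral_enorm_le_WNorm_mul hW hWm).trans_lt (ENNReal.mul_lt_top huW hWμ)⟩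

theorem enorm_integral_le_WNorm_mul (hW : ∀ x, 0 < W x) (hWm : AEMeasurable W μ) :
    ‖∫ x, u x ∂μ‖ₑ ≤ WNorm W u * ∫⁻ x, ENNReal.ofReal (W x) ∂μ :=
  (enorm_integral_le_lintegral_enorm u).trans (lintegral_enorm_le_WNorm_mul hW hWm)

theorem enorm_integral_sub_integral_le_WNorm_mul (hW : ∀ x, 0 < W x) (hWm : AEMeasurable W μ)
    (hu : Integrable u μ) (hv : Integrable v μ) :
    ‖∫ x, u x ∂μ - ∫ x, v x ∂μ‖ₑ ≤
      WNorm W (fun x => u x - v x) * ∫⁻ x, ENNReal.ofReal (W x) ∂μ := by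
  rw [← integral_sub hu hv]
  exact enorm_integral_le_WNorm_mul hW hWm

end WeightedNorm

section Infimum

variable {ι : Type*} {s : Set ι}

theorem sInf_image_le_sInf_image_add {G : Type*} [ConditionallyCompleteLattice G] [AddGroup G]
    [AddRightMono G] {f g : ι → G} (hs : s.Nonempty) (hf : BddBelow (f '' s)) {d : G}
    (h : ∀ i ∈ s, f i ≤ g i + d) : sInf (f '' s) ≤ sInf (g '' s) + d := by
  rw [← sub_le_iff_le_add]
  refine le_csInf (hs.image g) (Set.forall_mem_image.2 fun i hi => ?_)
  exact sub_le_iff_le_add.2 ((csInf_le hf (Set.mem_image_of_mem f hi)).trans (h i hi))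

variable {f g : ι → ℝ}

theorem enorm_sInf_image_sub_sInf_image_le (hs : s.Nonempty) (hf : BddBelow (f '' s))
    (hg : BddBelow (g '' s)) {d : ℝ≥0∞} (h : ∀ i ∈ s, ‖f i - g i‖ₑ ≤ d) :
    ‖sInf (f '' s) - sInf (g '' s)‖ₑ ≤ d := by
  obtain rfl | hd := eq_or_ne d ⊤
  · exact le_top
  simp only [Real.enorm_eq_ofReal_abs, ENNReal.ofReal_le_iff_le_toReal hd] at h ⊢
  refine abs_sub_le_iff.2 ⟨?_, ?_⟩ <;> rw [sub_le_iff_le_add']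
  · exact sInf_image_le_sInf_image_add hs hf fun i hi =>
      sub_le_iff_le_add'.1 (abs_sub_le_iff.1 (h i hi)).1
  · exact sInf_image_le_sInf_image_add hs hg fun i hi =>
      sub_le_iff_le_add'.1 (abs_sub_le_iff.1 (h i hi)).2

theorem bddBelow_image_add_of_enorm_le (hf : BddBelow (f '' s)) {d : ℝ≥0∞} (hd : d ≠ ⊤)
    (hg : ∀ i ∈ s, ‖g i‖ₑ ≤ d) : BddBelow ((fun i => f i + g i) '' s) := by
  obtain ⟨m, hm⟩ := hf
  refine ⟨m + -d.toReal, Set.forall_mem_image.2 fun i hi => ?_⟩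
  have abs_g_le : |g i| ≤ d.toReal := by
    simpa only [Real.enorm_eq_ofReal_abs, ENNReal.ofReal_le_iff_le_toReal hd] using hg i hi
  exact add_le_add (hm (Set.mem_image_of_mem f hi)) (abs_le.1 abs_g_le).1

end Infimum

section Bellman

variable {X A : Type*} [MeasurableSpace X] [MeasurableSpace A] {Adm : X → Set A}
  {Q : Kernel (X × A) X} {C : X × A → ℝ} {α β : ℝ} {W u v : X → ℝ}

theorem bddBelow_image_cost_add_discounted_integral {x : X} {b : ℝ≥0∞} (hb : b ≠ ⊤)
    (hC : BddBelow ((fun a => C (x, a)) '' Adm x)) (hW : ∀ y, 0 < W y) (hWm : Measurable W)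
    (hQW : ∀ a ∈ Adm x, ∫⁻ y, ENNReal.ofReal (W y) ∂(Q (x, a)) ≤ b) (huW : WNorm W u < ⊤) :
    BddBelow ((fun a => C (x, a) + α * ∫ y, u y ∂(Q (x, a))) '' Adm x) := by
  have bound_ne_top : ‖α‖ₑ * (WNorm W u * b) ≠ ⊤ :=
    ENNReal.mul_ne_top enorm_ne_top (ENNReal.mul_ne_top huW.ne hb)
  refine bddBelow_image_add_of_enorm_le hC bound_ne_top fun a ha => ?_
  calc ‖α * ∫ y, u y ∂(Q (x, a))‖ₑ
      = ‖α‖ₑ * ‖∫ y, u y ∂(Q (x, a))‖ₑ := enorm_mul _ _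
    _ ≤ ‖α‖ₑ * (WNorm W u * ∫⁻ y, ENNReal.ofReal (W y) ∂(Q (x, a))) := by
        gcongr
        exact enorm_integral_le_WNorm_mul hW hWm.aemeasurable
    _ ≤ ‖α‖ₑ * (WNorm W u * b) := by
        gcongr
        exact hQW a ha

theorem enorm_Tbell_sub_Tbell_le {x : X} {b : ℝ≥0∞} (hb : b ≠ ⊤) (hAne : (Adm x).Nonempty)
    (hC : BddBelow ((fun a => C (x, a)) '' Adm x)) (hW : ∀ y, 0 < W y) (hWm : Measurable W)
    (hQW : ∀ a ∈ Adm x, ∫⁻ y, ENNReal.ofReal (W y) ∂(Q (x, a)) ≤ b)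
    (hu : Measurable u) (hv : Measurable v) (huW : WNorm W u < ⊤) (hvW : WNorm W v < ⊤) :
    ‖Tbell Adm Q C α u x - Tbell Adm Q C α v x‖ₑ ≤
      ‖α‖ₑ * (WNorm W (fun y => u y - v y) * b) := by
  refine enorm_sInf_image_sub_sInf_image_le hAne
    (bddBelow_image_cost_add_discounted_integral hb hC hW hWm hQW huW)
    (bddBelow_image_cost_add_discounted_integral hb hC hW hWm hQW hvW) fun a ha => ?_
  have lintegral_W_lt_top : ∫⁻ y, ENNReal.ofReal (W y) ∂(Q (x, a)) < ⊤ :=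
    (hQW a ha).trans_lt hb.lt_top
  have u_integrable : Integrable u (Q (x, a)) := integrable_of_WNorm_lt_top hW
    hWm.aemeasurable lintegral_W_lt_top hu.aestronglyMeasurable huW
  have v_integrable : Integrable v (Q (x, a)) := integrable_of_WNorm_lt_top hW
    hWm.aemeasurable lintegral_W_lt_top hv.aestronglyMeasurable hvW
  rw [add_sub_add_left_eq_sub, ← mul_sub, enorm_mul]
  gcongr
  calc ‖∫ y, u y ∂(Q (x, a)) - ∫ y, v y ∂(Q (x, a))‖ₑ
      ≤ WNorm W (fun y => u y - v y) * ∫⁻ y, ENNReal.ofReal (W y) ∂(Q (x, a)) :=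
        enorm_integral_sub_integral_le_WNorm_mul hW hWm.aemeasurable u_integrable v_integrable
    _ ≤ WNorm W (fun y => u y - v y) * b := by
        gcongr
        exact hQW a ha

theorem Tbell_contraction_general (hAne : ∀ x, (Adm x).Nonempty)
    (hC : ∀ x, BddBelow ((fun a => C (x, a)) '' Adm x)) (hα : 0 ≤ α)
    (hW : ∀ x, 0 < W x) (hWm : Measurable W)
    (hQW : ∀ x, ∀ a ∈ Adm x,
      ∫⁻ y, ENNReal.ofReal (W y) ∂(Q (x, a)) ≤ ENNReal.ofReal (β * W x))
    (hu : Measurable u) (hv : Measurable v) (huW : WNorm W u < ⊤) (hvW : WNorm W v < ⊤) :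
    (∀ x, BddBelow ((fun a => C (x, a) + α * ∫ y, u y ∂(Q (x, a))) '' Adm x)) ∧
    (∀ x, BddBelow ((fun a => C (x, a) + α * ∫ y, v y ∂(Q (x, a))) '' Adm x)) ∧
    WNorm W (fun x => Tbell Adm Q C α u x - Tbell Adm Q C α v x) ≤
      ENNReal.ofReal (α * β) * WNorm W (fun x => u x - v x) := by
  refine ⟨fun x => ?_, fun x => ?_, (WNorm_le_iff hW).2 fun x => ?_⟩
  · exact bddBelow_image_cost_add_discounted_integral ENNReal.ofReal_ne_top (hC x) hW hWm
      (hQW x) huW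
  · exact bddBelow_image_cost_add_discounted_integral ENNReal.ofReal_ne_top (hC x) hW hWm
      (hQW x) hvW
  calc ‖Tbell Adm Q C α u x - Tbell Adm Q C α v x‖ₑ
      ≤ ‖α‖ₑ * (WNorm W (fun y => u y - v y) * ENNReal.ofReal (β * W x)) :=
        enorm_Tbell_sub_Tbell_le ENNReal.ofReal_ne_top (hAne x) (hC x) hW hWm (hQW x)
          hu hv huW hvW
    _ = ENNReal.ofReal (α * β) * WNorm W (fun y => u y - v y) * ENNReal.ofReal (W x) := by
        rw [Real.enorm_of_nonneg hα, ENNReal.ofReal_mul hα, ENNReal.ofReal_mul' (hW x).le]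
        ring

end Bellman

/-- Under the growth conditions (GC), the dynamic programming operator `T` maps
Borel functions of finite `W`-norm to real-valued functions (the defining infima
are over nonempty sets bounded below) and is a contraction of modulus
`γ = αβ < 1` in the weighted norm `‖·‖_W`. -/
theorem Tbell_contraction {X A : Type*}
    [MetricSpace X] [PolishSpace X] [MeasurableSpace X] [BorelSpace X]
    [MetricSpace A] [PolishSpace A] [MeasurableSpace A] [BorelSpace A]
    (Adm : X → Set A) (hAne : ∀ x, (Adm x).Nonempty)
    (hKmeas : MeasurableSet {p : X × A | p.2 ∈ Adm p.1})
    (Q : Kernel (X × A) X) [IsMarkovKernel Q]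
    (C : X × A → ℝ) (hCmeas : Measurable C)
    (α : ℝ) (hα0 : 0 < α) (hα1 : α < 1)
    (M β : ℝ) (hM : 0 < M) (hβ : 1 < β)
    (W : X → ℝ) (hWmeas : Measurable W) (hW1 : ∀ x, 1 ≤ W x)
    (hCW : ∀ x, ∀ a ∈ Adm x, |C (x, a)| ≤ M * W x)
    (hQW : ∀ x, ∀ a ∈ Adm x,
      ∫⁻ y, ENNReal.ofReal (W y) ∂(Q (x, a)) ≤ ENNReal.ofReal (β * W x))
    (hγ : α * β < 1)
    (u v : X → ℝ) (hu : Measurable u) (hv : Measurable v)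
    (huW : WNorm W u < ⊤) (hvW : WNorm W v < ⊤) :
    (∀ x, BddBelow ((fun a => C (x, a) + α * ∫ y, u y ∂(Q (x, a))) '' Adm x)) ∧
    (∀ x, BddBelow ((fun a => C (x, a) + α * ∫ y, v y ∂(Q (x, a))) '' Adm x)) ∧
    WNorm W (fun x => Tbell Adm Q C α u x - Tbell Adm Q C α v x) ≤
      ENNReal.ofReal (α * β) * WNorm W (fun x => u x - v x) := by
  have cost_bddBelow (x : X) : BddBelow ((fun a => C (x, a)) '' Adm x) :=
    ⟨-(M * W x), Set.forall_mem_image.2 fun a ha => (abs_le.1 (hCW x a ha)).1⟩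
  exact Tbell_contraction_general hAne cost_bddBelow hα0.le (fun x => one_pos.trans_le (hW1 x))
    hWmeas hQW hu hv huW hvW
end

section
/- Assume the growth conditions (GC) and the compactness-continuity conditions (CC). Let u : X → ℝ be lower semicontinuous with ‖u‖_W < ∞. Then Tu is lower semicontinuous with ‖Tu‖_W < ∞, the infimum defining Tu(x) is attained for every x ∈ X, and there exists a measurable selector f (a Borel measurable f : X → A with f(x) ∈ A(x) for all x) such that Tu(x) = C(x,f(x)) + α ∫_X u(y) Q(dy|x,f(x)) for all x ∈ X. -/
open MeasureTheory ProbabilityTheory Filter Topology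
open scoped ENNReal

/-!
Shifting `u` by a multiple of `W` makes it bounded below, hence a monotone limit of bounded
continuous functions. Monotone convergence and weak continuity of `Q` then make `C + α ∫ u dQ`
lower semicontinuous on the graph of the admissible actions, and minimizing a lower semicontinuous
function over compact, upper hemicontinuous constraints preserves lower semicontinuity.

For the selector, the minimizers form a measurable compact-valued multifunction. Minimizing
successively the distances to the points of a dense sequence shrinks every value to a single point
without losing measurability.
-/

section LipschitzEnvelope

open scoped NNReal BoundedContinuousFunction

variable {X : Type*} [PseudoMetricSpace X] {v : X → ℝ}

/-- The Pasch–Hausdorff envelope: the largest `L`-Lipschitz minorant of `v`. It is meaningful for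
`v` bounded below; where the infimum is `-∞`, the real-valued `⨅` gives `0`. -/
noncomputable def lipschitzEnvelope (v : X → ℝ) (L : ℝ≥0) (x : X) : ℝ :=
  ⨅ y, v y + L * dist x y

theorem bddBelow_range_add_mul_dist (hv : BddBelow (Set.range v)) (L : ℝ≥0) (x : X) :
    BddBelow (Set.range fun y ↦ v y + L * dist x y) := by
  obtain ⟨m, hm⟩ := hv
  refine ⟨m, ?_⟩
  rintro _ ⟨y, rfl⟩
  exact (hm ⟨y, rfl⟩).trans (le_add_of_nonneg_right (by positivity))

theorem lipschitzEnvelope_le (hv : BddBelow (Set.range v)) (L : ℝ≥0) (x : X) :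
    lipschitzEnvelope v L x ≤ v x :=
  (ciInf_le (bddBelow_range_add_mul_dist hv L x) x).trans_eq (by simp)

theorem le_lipschitzEnvelope {m : ℝ} (hm : ∀ y, m ≤ v y) (L : ℝ≥0) (x : X) :
    m ≤ lipschitzEnvelope v L x :=
  have : Nonempty X := ⟨x⟩
  le_ciInf fun y ↦ (hm y).trans (le_add_of_nonneg_right (by positivity))

theorem monotone_lipschitzEnvelope (hv : BddBelow (Set.range v)) :
    Monotone (lipschitzEnvelope v) := fun L L' hL x ↦
  ciInf_mono (bddBelow_range_add_mul_dist hv L x) fun y ↦ by gcongr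

theorem lipschitzWith_lipschitzEnvelope (hv : BddBelow (Set.range v)) (L : ℝ≥0) :
    LipschitzWith L (lipschitzEnvelope v L) := by
  refine LipschitzWith.of_le_add_mul L fun x x' ↦ ?_
  have : Nonempty X := ⟨x⟩
  rw [← sub_le_iff_le_add]
  refine le_ciInf fun y ↦ sub_le_iff_le_add.2 ?_
  calc lipschitzEnvelope v L x
      ≤ v y + L * dist x y := ciInf_le (bddBelow_range_add_mul_dist hv L x) y
    _ ≤ v y + L * (dist x x' + dist x' y) := by gcongr; exact dist_triangle _ _ _
    _ = v y + L * dist x' y + L * dist x x' := by ring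

theorem tendsto_lipschitzEnvelope (hv : BddBelow (Set.range v)) {x : X}
    (hx : LowerSemicontinuousAt v x) :
    Tendsto (fun L ↦ lipschitzEnvelope v L x) atTop (𝓝 (v x)) := by
  have : Nonempty X := ⟨x⟩
  refine tendsto_order.2 ⟨fun c hc ↦ ?_, fun c hc ↦ .of_forall fun L ↦
    (lipschitzEnvelope_le hv L x).trans_lt hc⟩
  obtain ⟨m, hm⟩ := hv
  obtain ⟨d, hcd, hd⟩ := exists_between hc
  obtain ⟨δ, hδ, hball⟩ := Metric.eventually_nhds_iff.1 (hx d hd)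
  filter_upwards [eventually_ge_atTop ((d - m) / δ).toNNReal] with L hL
  have hLδ : d - m ≤ L * δ := (div_le_iff₀ hδ).1 (Real.toNNReal_le_iff_le_coe.1 hL)
  refine hcd.trans_le (le_ciInf fun y ↦ ?_)
  rcases lt_or_ge (dist y x) δ with hnear | hfar
  · exact (hball hnear).le.trans (le_add_of_nonneg_right (by positivity))
  · calc d ≤ m + L * δ := by linarith
      _ ≤ v y + L * dist x y := by
        rw [dist_comm x y]
        gcongr
        exact hm ⟨y, rfl⟩

theorem exists_monotone_boundedContinuousFunction_tendsto (hv : BddBelow (Set.range v))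
    (hlsc : LowerSemicontinuous v) :
    ∃ g : ℕ → X →ᵇ ℝ, Monotone g ∧ ∀ x, Tendsto (fun n ↦ g n x) atTop (𝓝 (v x)) := by
  obtain ⟨m, hm⟩ := hv
  have hv : BddBelow (Set.range v) := ⟨m, hm⟩
  have hbound (n : ℕ) (x : X) : ‖min (lipschitzEnvelope v n x) n‖ ≤ max |m| n := by
    have hmx : m ≤ lipschitzEnvelope v n x := le_lipschitzEnvelope (fun y ↦ hm ⟨y, rfl⟩) n x
    refine abs_le.2 ⟨?_, (min_le_right _ _).trans (le_max_right _ _)⟩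
    refine (neg_le_neg (le_max_left _ _)).trans (le_min ((neg_abs_le m).trans hmx) ?_)
    exact (neg_nonpos.2 (abs_nonneg m)).trans n.cast_nonneg
  refine ⟨fun n ↦ .ofNormedAddCommGroup (fun x ↦ min (lipschitzEnvelope v n x) n)
    ((lipschitzWith_lipschitzEnvelope hv n).continuous.min continuous_const) _ (hbound n),
    fun n k hnk x ↦ ?_, fun x ↦ ?_⟩
  · exact min_le_min (monotone_lipschitzEnvelope hv (Nat.cast_le.2 hnk) x) (Nat.cast_le.2 hnk)
  · refine ((tendsto_lipschitzEnvelope hv (hlsc x)).comp tendsto_natCast_atTop_atTop).congr' ?_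
    filter_upwards [tendsto_natCast_atTop_atTop.eventually_ge_atTop (v x)] with n hn
    exact (min_eq_left ((lipschitzEnvelope_le hv n x).trans hn)).symm

end LipschitzEnvelope

section WeaklyContinuousFamily

open scoped BoundedContinuousFunction

variable {X P : Type*} [PseudoMetricSpace X] [MeasurableSpace X] [OpensMeasurableSpace X]
  [TopologicalSpace P] {s : Set P} {μ : P → Measure X} [∀ p, IsFiniteMeasure (μ p)]

theorem lowerSemicontinuousOn_integral_of_bddBelow
    (hμ : ∀ g : X →ᵇ ℝ, ContinuousOn (fun p ↦ ∫ y, g y ∂μ p) s)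
    {v : X → ℝ} (hv : LowerSemicontinuous v) (hbdd : BddBelow (Set.range v))
    (hint : ∀ p ∈ s, Integrable v (μ p)) :
    LowerSemicontinuousOn (fun p ↦ ∫ y, v y ∂μ p) s := by
  obtain ⟨g, hg_mono, hg_lim⟩ := exists_monotone_boundedContinuousFunction_tendsto hbdd hv
  have hg_le (n : ℕ) (y : X) : g n y ≤ v y :=
    Monotone.ge_of_tendsto (fun _ _ hkl ↦ hg_mono hkl y) (hg_lim y) n
  intro p hp c hc
  have hlim : Tendsto (fun n ↦ ∫ y, g n y ∂μ p) atTop (𝓝 (∫ y, v y ∂μ p)) :=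
    integral_tendsto_of_tendsto_of_monotone (fun n ↦ (g n).integrable _) (hint p hp)
      (.of_forall fun y _ _ hkl ↦ hg_mono hkl y) (.of_forall hg_lim)
  obtain ⟨n, hn⟩ := (hlim.eventually_const_lt hc).exists
  filter_upwards [(hμ (g n) p hp).eventually_const_lt hn, self_mem_nhdsWithin] with q hq hqs
  exact hq.trans_le (integral_mono ((g n).integrable _) (hint q hqs) (hg_le n))

theorem lowerSemicontinuousOn_integral_of_neg_le
    (hμ : ∀ g : X →ᵇ ℝ, ContinuousOn (fun p ↦ ∫ y, g y ∂μ p) s)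
    {u w : X → ℝ} (hu : LowerSemicontinuous u) (hw : Continuous w) (hwu : ∀ y, -w y ≤ u y)
    (hu_int : ∀ p ∈ s, Integrable u (μ p)) (hw_int : ∀ p ∈ s, Integrable w (μ p))
    (hw_cont : ContinuousOn (fun p ↦ ∫ y, w y ∂μ p) s) :
    LowerSemicontinuousOn (fun p ↦ ∫ y, u y ∂μ p) s := by
  have hbdd : BddBelow (Set.range fun y ↦ u y + w y) := by
    refine ⟨0, ?_⟩
    rintro _ ⟨y, rfl⟩
    exact neg_le_iff_add_nonneg.1 (hwu y)
  have hsum : LowerSemicontinuousOn (fun p ↦ ∫ y, u y + w y ∂μ p) s :=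
    lowerSemicontinuousOn_integral_of_bddBelow hμ (hu.add hw.lowerSemicontinuous) hbdd
      fun p hp ↦ (hu_int p hp).add (hw_int p hp)
  have hneg : LowerSemicontinuousOn (fun p ↦ -∫ y, w y ∂μ p) s :=
    hw_cont.neg.lowerSemicontinuousOn
  have hcancel : Set.EqOn (fun p ↦ ∫ y, u y + w y ∂μ p + -∫ y, w y ∂μ p)
      (fun p ↦ ∫ y, u y ∂μ p) s := fun p hp ↦ by
    simp only [integral_add (hu_int p hp) (hw_int p hp), add_neg_cancel_right]
  exact fun p hp ↦ LowerSemicontinuousWithinAt.congr_of_eventuallyEq (hsum.add hneg p hp) hp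
    hcancel.eventuallyEq_nhdsWithin

end WeaklyContinuousFamily

section Minimizers

variable {A : Type*}

/-- The set of points of `s` at which `g` attains its minimum over `s`. -/
def minimizers (g : A → ℝ) (s : Set A) : Set A :=
  {a ∈ s | IsMinOn g s a}

variable {g : A → ℝ} {s : Set A}

theorem sInf_image_eq_of_mem_minimizers {a : A} (ha : a ∈ minimizers g s) :
    sInf (g '' s) = g a :=
  IsLeast.csInf_eq ⟨Set.mem_image_of_mem g ha.1, Set.forall_mem_image.2 ha.2⟩

variable [TopologicalSpace A]

theorem isCompact_minimizers (hs : IsCompact s) (hg : LowerSemicontinuousOn g s) :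
    IsCompact (minimizers g s) := by
  rcases (minimizers g s).eq_empty_or_nonempty with hempty | ⟨a, ha⟩
  · exact hempty ▸ isCompact_empty
  · have hsublevel : minimizers g s = s ∩ g ⁻¹' Set.Iic (g a) :=
      Set.ext fun b ↦ ⟨fun hb ↦ ⟨hb.1, hb.2 ha.1⟩,
        fun hb ↦ ⟨hb.1, isMinOn_iff.2 fun _ hc ↦ hb.2.trans (ha.2 hc)⟩⟩
    exact hsublevel ▸ hg.isCompact_inter_preimage_Iic hs (g a)

theorem minimizers_inter_nonempty_iff (hs : IsCompact s) (hne : s.Nonempty)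
    (hg : LowerSemicontinuousOn g s) {F : Set A} (hF : IsClosed F) :
    (minimizers g s ∩ F).Nonempty ↔
      ∀ q : ℚ, (∃ a ∈ s, g a ≤ q) → ∃ a ∈ s ∩ F, g a ≤ q := by
  refine ⟨fun ⟨a, ha, haF⟩ q ⟨b, hb, hbq⟩ ↦ ⟨a, ⟨ha.1, haF⟩, (ha.2 hb).trans hbq⟩, fun h ↦ ?_⟩
  obtain ⟨a, ha, ha_min⟩ := hg.exists_isMinOn hne hs
  have hneF : (s ∩ F).Nonempty := by
    obtain ⟨q, hq⟩ := exists_rat_gt (g a)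
    obtain ⟨b, hb, -⟩ := h q ⟨a, ha, hq.le⟩
    exact ⟨b, hb⟩
  obtain ⟨b, hb, hb_min⟩ :=
    (hg.mono Set.inter_subset_left).exists_isMinOn hneF (hs.inter_right hF)
  have hba : g b ≤ g a := by
    by_contra! hlt
    obtain ⟨q, haq, hqb⟩ := exists_rat_btwn hlt
    obtain ⟨d, hd, hdq⟩ := h q ⟨a, ha, haq.le⟩
    exact ((hb_min hd).trans hdq).not_gt hqb
  exact ⟨b, ⟨hb.1, fun _ hc ↦ hba.trans (ha_min hc)⟩, hb.2⟩

end Minimizers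

section MeasurableSelection

/-- Multifunctions with nonempty compact values that are measurable in the sense that the set of
points whose value meets a given closed set is measurable. -/
structure MeasurableCompactValued {X A : Type*} [MeasurableSpace X] [TopologicalSpace A]
    (Φ : X → Set A) : Prop where
  nonempty (x : X) : (Φ x).Nonempty
  isCompact (x : X) : IsCompact (Φ x)
  measurableSet_inter_nonempty {F : Set A} (hF : IsClosed F) :
    MeasurableSet {x | (Φ x ∩ F).Nonempty}

/-- Successive minimization of `g 0`, `g 1`, … starting from the set `s`. -/
def iteratedMinimizers {A : Type*} (g : ℕ → A → ℝ) (s : Set A) : ℕ → Set A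
  | 0 => s
  | n + 1 => minimizers (g n) (iteratedMinimizers g s n)

theorem antitone_iteratedMinimizers {A : Type*} (g : ℕ → A → ℝ) (s : Set A) :
    Antitone (iteratedMinimizers g s) :=
  antitone_nat_of_succ_le fun _ ↦ Set.sep_subset _ _

theorem subsingleton_iInter_iteratedMinimizers {A : Type*} {g : ℕ → A → ℝ}
    (hsep : ∀ a b, (∀ n, g n a = g n b) → a = b) (s : Set A) :
    (⋂ n, iteratedMinimizers g s n).Subsingleton := by
  refine fun a ha b hb ↦ hsep a b fun n ↦ ?_
  rw [Set.mem_iInter] at ha hb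
  exact le_antisymm ((ha (n + 1)).2 (hb n)) ((hb (n + 1)).2 (ha n))

namespace MeasurableCompactValued

variable {X A : Type*} [MeasurableSpace X] [TopologicalSpace A]

theorem of_minimizers {Φ : X → Set A} {g : X → A → ℝ} (hne : ∀ x, (Φ x).Nonempty)
    (hcomp : ∀ x, IsCompact (Φ x)) (hg : ∀ x, LowerSemicontinuousOn (g x) (Φ x))
    (hmeas : ∀ F, IsClosed F → ∀ q : ℝ, MeasurableSet {x | ∃ a ∈ Φ x ∩ F, g x a ≤ q}) :
    MeasurableCompactValued fun x ↦ minimizers (g x) (Φ x) where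
  nonempty x := (hg x).exists_isMinOn (hne x) (hcomp x)
  isCompact x := isCompact_minimizers (hcomp x) (hg x)
  measurableSet_inter_nonempty {F} hF := by
    have hmeas_univ (q : ℝ) : MeasurableSet {x | ∃ a ∈ Φ x, g x a ≤ q} := by
      simpa only [Set.inter_univ] using hmeas Set.univ isClosed_univ q
    simp only [minimizers_inter_nonempty_iff (hcomp _) (hne _) (hg _) hF]
    rw [Set.ofPred_forall]
    exact .iInter fun q ↦ .imp (hmeas_univ q) (hmeas F hF q)

theorem minimizers {Φ : X → Set A} (hΦ : MeasurableCompactValued Φ) {g : A → ℝ}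
    (hg : LowerSemicontinuous g) : MeasurableCompactValued fun x ↦ _root_.minimizers g (Φ x) := by
  refine of_minimizers hΦ.nonempty hΦ.isCompact (fun _ ↦ hg.lowerSemicontinuousOn _) fun F hF q ↦ ?_
  have hsublevel (x : X) : (∃ a ∈ Φ x ∩ F, g a ≤ q) ↔ (Φ x ∩ (F ∩ g ⁻¹' Set.Iic q)).Nonempty := by
    rw [← Set.inter_assoc]
    rfl
  simpa only [hsublevel] using
    hΦ.measurableSet_inter_nonempty (hF.inter (hg.isClosed_preimage q))

theorem iteratedMinimizers {Φ : X → Set A} (hΦ : MeasurableCompactValued Φ) {g : ℕ → A → ℝ}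
    (hg : ∀ n, LowerSemicontinuous (g n)) (n : ℕ) :
    MeasurableCompactValued fun x ↦ _root_.iteratedMinimizers g (Φ x) n := by
  induction n with
  | zero => exact hΦ
  | succ n ih => exact ih.minimizers (hg n)

theorem iInter [T2Space A] {Φ : ℕ → X → Set A} (hΦ : ∀ n, MeasurableCompactValued (Φ n))
    (hanti : ∀ x, Antitone fun n ↦ Φ n x) : MeasurableCompactValued fun x ↦ ⋂ n, Φ n x := by
  have hmeets {F : Set A} (hF : IsClosed F) (x : X) :
      ((⋂ n, Φ n x) ∩ F).Nonempty ↔ ∀ n, (Φ n x ∩ F).Nonempty := by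
    refine ⟨fun h n ↦ h.mono (Set.inter_subset_inter_left _ (Set.iInter_subset _ n)), fun h ↦ ?_⟩
    rw [Set.iInter_inter]
    exact IsCompact.nonempty_iInter_of_sequence_nonempty_isCompact_isClosed _
      (fun n ↦ Set.inter_subset_inter_left _ (hanti x n.le_succ)) h
      (((hΦ 0).isCompact x).inter_right hF) fun n ↦ ((hΦ n).isCompact x).isClosed.inter hF
  refine ⟨fun x ↦ ?_, fun x ↦ ?_, fun hF ↦ ?_⟩
  · simpa only [Set.inter_univ] using
      (hmeets isClosed_univ x).2 fun n ↦ by simpa only [Set.inter_univ] using (hΦ n).nonempty x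
  · exact ((hΦ 0).isCompact x).of_isClosed_subset
      (isClosed_iInter fun n ↦ ((hΦ n).isCompact x).isClosed) (Set.iInter_subset _ 0)
  · simp only [hmeets hF]
    rw [Set.ofPred_forall]
    exact .iInter fun n ↦ (hΦ n).measurableSet_inter_nonempty hF

theorem exists_measurable_of_subsingleton [MeasurableSpace A] [BorelSpace A] {Φ : X → Set A}
    (hΦ : MeasurableCompactValued Φ) (hsub : ∀ x, (Φ x).Subsingleton) :
    ∃ f : X → A, Measurable f ∧ ∀ x, f x ∈ Φ x := by
  choose f hf using hΦ.nonempty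
  refine ⟨f, measurable_of_isClosed fun F hF ↦ ?_, hf⟩
  have hpreimage : f ⁻¹' F = {x | (Φ x ∩ F).Nonempty} := by
    ext x
    refine ⟨fun hx ↦ ⟨f x, hf x, hx⟩, fun ⟨a, ha, haF⟩ ↦ ?_⟩
    rwa [Set.mem_preimage, hsub x (hf x) ha]
  exact hpreimage ▸ hΦ.measurableSet_inter_nonempty hF

theorem exists_measurable_of_separating [T2Space A] [MeasurableSpace A] [BorelSpace A]
    {Φ : X → Set A} (hΦ : MeasurableCompactValued Φ) {g : ℕ → A → ℝ}
    (hg : ∀ n, LowerSemicontinuous (g n)) (hsep : ∀ a b, (∀ n, g n a = g n b) → a = b) :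
    ∃ f : X → A, Measurable f ∧ ∀ x, f x ∈ Φ x := by
  obtain ⟨f, hf_meas, hf⟩ :=
    (iInter (hΦ.iteratedMinimizers hg) fun x ↦
      antitone_iteratedMinimizers g (Φ x)).exists_measurable_of_subsingleton
      fun x ↦ subsingleton_iInter_iteratedMinimizers hsep (Φ x)
  exact ⟨f, hf_meas, fun x ↦ Set.mem_iInter.1 (hf x) 0⟩

end MeasurableCompactValued

theorem eq_of_forall_dist_denseSeq_eq {A : Type*} [MetricSpace A]
    [TopologicalSpace.SeparableSpace A] [Nonempty A] {a b : A}
    (h : ∀ n, dist a (TopologicalSpace.denseSeq A n) = dist b (TopologicalSpace.denseSeq A n)) :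
    a = b := by
  have hdist : dist a = dist b :=
    Continuous.ext_on (TopologicalSpace.denseRange_denseSeq A) (continuous_const.dist continuous_id)
      (continuous_const.dist continuous_id) (Set.forall_mem_range.2 h)
  exact dist_eq_zero.1 ((congrFun hdist b).trans (dist_self b))

theorem MeasurableCompactValued.exists_measurable_selector {X A : Type*} [MeasurableSpace X]
    [MetricSpace A] [TopologicalSpace.SeparableSpace A] [MeasurableSpace A] [BorelSpace A]
    {Φ : X → Set A} (hΦ : MeasurableCompactValued Φ) :
    ∃ f : X → A, Measurable f ∧ ∀ x, f x ∈ Φ x := by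
  rcases isEmpty_or_nonempty A with _ | _
  · have : IsEmpty X := ⟨fun x ↦ IsEmpty.false (hΦ.nonempty x).some⟩
    exact ⟨isEmptyElim, measurable_of_empty _, isEmptyElim⟩
  · exact hΦ.exists_measurable_of_separating
      (g := fun n a ↦ dist a (TopologicalSpace.denseSeq A n))
      (fun _ ↦ (continuous_id.dist continuous_const).lowerSemicontinuous)
      fun _ _ ↦ eq_of_forall_dist_denseSeq_eq

end MeasurableSelection

section ParametricMinimization

variable {X A : Type*} [TopologicalSpace X]

theorem lowerSemicontinuousOn_section [TopologicalSpace A] {Φ : X → Set A} {G : X × A → ℝ}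
    (hG : LowerSemicontinuousOn G {p | p.2 ∈ Φ p.1}) (x : X) :
    LowerSemicontinuousOn (fun a ↦ G (x, a)) (Φ x) :=
  hG.comp (Continuous.prodMk_right x).continuousOn fun _ ha ↦ ha

theorem isClosed_setOf_exists_mem_le [TopologicalSpace A] {Φ : X → Set A} {G : X × A → ℝ}
    (hΦ : UpperHemicontinuous Φ) (hcomp : ∀ x, IsCompact (Φ x))
    (hG : LowerSemicontinuousOn G {p | p.2 ∈ Φ p.1}) (c : ℝ) :
    IsClosed {x | ∃ a ∈ Φ x, G (x, a) ≤ c} := by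
  rw [← isOpen_compl_iff, isOpen_iff_eventually]
  intro x hx
  have hgt : ∀ᶠ p in 𝓝ˢ ({x} ×ˢ Φ x), p.2 ∈ Φ p.1 → c < G p := by
    rw [eventually_nhdsSet_iff_forall]
    rintro ⟨_, a⟩ ⟨rfl, ha⟩
    exact eventually_nhdsWithin_iff.1 (hG _ ha c (not_le.1 fun hle ↦ hx ⟨a, ha, hle⟩))
  rw [isCompact_singleton.nhdsSet_prod_eq (hcomp x), nhdsSet_singleton] at hgt
  obtain ⟨N, hN, U, hU, hNU⟩ := Filter.eventually_prod_iff.1 hgt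
  filter_upwards [hN, hΦ x _ hU] with x' hx'N hx'U
  rintro ⟨a, ha, hle⟩
  exact (hNU hx'N (subset_of_mem_nhdsSet hx'U ha) ha).not_ge hle

theorem lowerSemicontinuous_sInf_image [TopologicalSpace A] {Φ : X → Set A} {G : X × A → ℝ}
    (hΦ : UpperHemicontinuous Φ) (hne : ∀ x, (Φ x).Nonempty) (hcomp : ∀ x, IsCompact (Φ x))
    (hG : LowerSemicontinuousOn G {p | p.2 ∈ Φ p.1}) :
    LowerSemicontinuous fun x ↦ sInf ((fun a ↦ G (x, a)) '' Φ x) := by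
  refine lowerSemicontinuous_iff_isClosed_preimage.2 fun c ↦ ?_
  convert isClosed_setOf_exists_mem_le hΦ hcomp hG c using 1
  ext x
  obtain ⟨a, ha⟩ := (lowerSemicontinuousOn_section hG x).exists_isMinOn (hne x) (hcomp x)
  rw [Set.mem_preimage, sInf_image_eq_of_mem_minimizers ha]
  exact ⟨fun hle ↦ ⟨a, ha.1, hle⟩, fun ⟨b, hb, hle⟩ ↦ (ha.2 hb).trans hle⟩

theorem exists_measurable_mem_minimizers [MeasurableSpace X] [OpensMeasurableSpace X]
    [MetricSpace A] [TopologicalSpace.SeparableSpace A] [MeasurableSpace A] [BorelSpace A]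
    {Φ : X → Set A} {G : X × A → ℝ}
    (hΦ : UpperHemicontinuous Φ) (hne : ∀ x, (Φ x).Nonempty) (hcomp : ∀ x, IsCompact (Φ x))
    (hG : LowerSemicontinuousOn G {p | p.2 ∈ Φ p.1}) :
    ∃ f : X → A, Measurable f ∧ ∀ x, f x ∈ minimizers (fun a ↦ G (x, a)) (Φ x) := by
  refine (MeasurableCompactValued.of_minimizers hne hcomp
    (lowerSemicontinuousOn_section hG) fun F hF q ↦ ?_).exists_measurable_selector
  exact (isClosed_setOf_exists_mem_le (hΦ.inter hF) (fun x ↦ (hcomp x).inter_right hF)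
    (hG.mono fun _ hp ↦ hp.1) q).measurableSet

end ParametricMinimization

section Bellman

open scoped BoundedContinuousFunction

theorem WNorm_lt_top_iff {X : Type*} {W u : X → ℝ} (hW : ∀ x, 0 < W x) :
    WNorm W u < ⊤ ↔ ∃ m, ∀ x, |u x| ≤ m * W x := by
  refine ⟨fun h ↦ ⟨(WNorm W u).toReal, fun x ↦ ?_⟩, fun ⟨m, hm⟩ ↦ ?_⟩
  · rw [← div_le_iff₀ (hW x), ← ENNReal.ofReal_le_iff_le_toReal h.ne]
    exact le_iSup (fun x ↦ ENNReal.ofReal (|u x| / W x)) x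
  · refine lt_of_le_of_lt (iSup_le fun x ↦ ?_) (ENNReal.ofReal_lt_top (r := m))
    exact ENNReal.ofReal_le_ofReal ((div_le_iff₀ (hW x)).2 (hm x))

theorem integral_le_of_lintegral_ofReal_le {Ω : Type*} [MeasurableSpace Ω] {μ : Measure Ω}
    {w : Ω → ℝ} {b : ℝ} (hw : 0 ≤ᵐ[μ] w) (hw_meas : AEStronglyMeasurable w μ) (hb : 0 ≤ b)
    (h : ∫⁻ y, ENNReal.ofReal (w y) ∂μ ≤ ENNReal.ofReal b) : ∫ y, w y ∂μ ≤ b := by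
  rw [integral_eq_lintegral_of_nonneg_ae hw hw_meas]
  exact ENNReal.toReal_le_of_le_ofReal hb h

/-- The cost `C(x,a) + α ∫ u dQ(·|x,a)` minimized by the Bellman operator, as a function of the
state-action pair. -/
noncomputable def actionCost {X S : Type*} [MeasurableSpace X] [MeasurableSpace S]
    (Q : Kernel S X) (C : S → ℝ) (α : ℝ) (u : X → ℝ) (p : S) : ℝ :=
  C p + α * ∫ y, u y ∂Q p

theorem abs_actionCost_le {X S : Type*} [MeasurableSpace X] [MeasurableSpace S]
    {Q : Kernel S X} {C : S → ℝ} {α : ℝ} (hα : 0 ≤ α) {u W : X → ℝ} {p : S} {M m b : ℝ}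
    (hm : 0 ≤ m) (hC : |C p| ≤ M) (hu : ∀ y, |u y| ≤ m * W y)
    (hW_int : Integrable W (Q p)) (hW : ∫ y, W y ∂Q p ≤ b) :
    |actionCost Q C α u p| ≤ M + α * (m * b) := by
  have hu_integral : |∫ y, u y ∂Q p| ≤ m * b :=
    calc ‖∫ y, u y ∂Q p‖ ≤ ∫ y, m * W y ∂Q p :=
          norm_integral_le_of_norm_le (hW_int.const_mul m) (.of_forall hu)
      _ = m * ∫ y, W y ∂Q p := integral_const_mul _ _
      _ ≤ m * b := by gcongr
  calc |actionCost Q C α u p| ≤ |C p| + |α * ∫ y, u y ∂Q p| := abs_add_le _ _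
    _ = |C p| + α * |∫ y, u y ∂Q p| := by rw [abs_mul, abs_of_nonneg hα]
    _ ≤ M + α * (m * b) := by gcongr

theorem lowerSemicontinuousOn_actionCost {X S : Type*} [PseudoMetricSpace X] [MeasurableSpace X]
    [OpensMeasurableSpace X] [TopologicalSpace S] [MeasurableSpace S] {K : Set S}
    {Q : Kernel S X} [IsFiniteKernel Q] {C : S → ℝ} {α : ℝ} (hα : 0 ≤ α)
    (hC : LowerSemicontinuousOn C K)
    (hQ : ∀ g : X →ᵇ ℝ, ContinuousOn (fun p ↦ ∫ y, g y ∂Q p) K)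
    {u W : X → ℝ} {m : ℝ} (hu : LowerSemicontinuous u) (hum : ∀ x, |u x| ≤ m * W x)
    (hW : Continuous W) (hW_int : ∀ p ∈ K, Integrable W (Q p))
    (hQW : ContinuousOn (fun p ↦ ∫ y, W y ∂Q p) K) :
    LowerSemicontinuousOn (actionCost Q C α u) K := by
  have hu_int (p : S) (hp : p ∈ K) : Integrable u (Q p) :=
    ((hW_int p hp).const_mul m).mono' hu.measurable.aestronglyMeasurable (.of_forall hum)
  have hmW : ContinuousOn (fun p ↦ ∫ y, m * W y ∂Q p) K := by
    simp only [integral_const_mul]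
    exact continuousOn_const.mul hQW
  have hintegral : LowerSemicontinuousOn (fun p ↦ ∫ y, u y ∂Q p) K :=
    lowerSemicontinuousOn_integral_of_neg_le hQ hu (continuous_const.mul hW)
      (fun y ↦ (abs_le.1 (hum y)).1) hu_int (fun p hp ↦ (hW_int p hp).const_mul m) hmW
  exact hC.add ((continuous_const_mul α).comp_lowerSemicontinuousOn hintegral
    (monotone_mul_left_of_nonneg hα))

theorem Tbell_lsc_and_selector_general {X A : Type*}
    [PseudoMetricSpace X] [MeasurableSpace X] [OpensMeasurableSpace X]
    [MetricSpace A] [TopologicalSpace.SeparableSpace A] [MeasurableSpace A] [BorelSpace A]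
    {Adm : X → Set A} (hAne : ∀ x, (Adm x).Nonempty) (hAcomp : ∀ x, IsCompact (Adm x))
    (hAusc : UpperHemicontinuous Adm)
    {Q : Kernel (X × A) X} [IsFiniteKernel Q] {C : X × A → ℝ} {α : ℝ} (hα : 0 ≤ α)
    {M β : ℝ} (hβ : 0 ≤ β) {W : X → ℝ} (hW : ∀ x, 0 < W x)
    (hCW : ∀ x, ∀ a ∈ Adm x, |C (x, a)| ≤ M * W x)
    (hQW : ∀ x, ∀ a ∈ Adm x,
      ∫⁻ y, ENNReal.ofReal (W y) ∂Q (x, a) ≤ ENNReal.ofReal (β * W x))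
    (hClsc : LowerSemicontinuousOn C {p | p.2 ∈ Adm p.1})
    (hQweak : ∀ g : X →ᵇ ℝ, ContinuousOn (fun p ↦ ∫ y, g y ∂Q p) {p | p.2 ∈ Adm p.1})
    (hWcont : Continuous W)
    (hQWcont : ContinuousOn (fun p ↦ ∫ y, W y ∂Q p) {p | p.2 ∈ Adm p.1})
    {u : X → ℝ} (hu : LowerSemicontinuous u) (huW : WNorm W u < ⊤) :
    LowerSemicontinuous (Tbell Adm Q C α u) ∧
    WNorm W (Tbell Adm Q C α u) < ⊤ ∧
    (∀ x, ∃ a ∈ Adm x,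
      Tbell Adm Q C α u x = C (x, a) + α * ∫ y, u y ∂Q (x, a)) ∧
    ∃ f : X → A, Measurable f ∧ (∀ x, f x ∈ Adm x) ∧
      ∀ x, Tbell Adm Q C α u x = C (x, f x) + α * ∫ y, u y ∂Q (x, f x) := by
  obtain ⟨m, hum⟩ := (WNorm_lt_top_iff hW).1 huW
  have hW_meas (p : X × A) : AEStronglyMeasurable W (Q p) := hWcont.measurable.aestronglyMeasurable
  have hW_nonneg (p : X × A) : 0 ≤ᵐ[Q p] W := .of_forall fun y ↦ (hW y).le
  have hW_int (x : X) (a : A) (ha : a ∈ Adm x) : Integrable W (Q (x, a)) :=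
    (lintegral_ofReal_ne_top_iff_integrable (hW_meas _) (hW_nonneg _)).1
      ((hQW x a ha).trans_lt ENNReal.ofReal_lt_top).ne
  have hcost : LowerSemicontinuousOn (actionCost Q C α u) {p | p.2 ∈ Adm p.1} :=
    lowerSemicontinuousOn_actionCost hα hClsc hQweak hu hum hWcont
      (fun p hp ↦ hW_int p.1 p.2 hp) hQWcont
  obtain ⟨f, hf_meas, hf⟩ := exists_measurable_mem_minimizers hAusc hAne hAcomp hcost
  have hTf (x : X) : Tbell Adm Q C α u x = actionCost Q C α u (x, f x) :=
    sInf_image_eq_of_mem_minimizers (hf x)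
  have hT_bound (x : X) : |Tbell Adm Q C α u x| ≤ (M + α * (m * β)) * W x := by
    have hm : 0 ≤ m := nonneg_of_mul_nonneg_left ((abs_nonneg _).trans (hum x)) (hW x)
    have hW_le : ∫ y, W y ∂Q (x, f x) ≤ β * W x :=
      integral_le_of_lintegral_ofReal_le (hW_nonneg _) (hW_meas _)
        (mul_nonneg hβ (hW x).le) (hQW x _ (hf x).1)
    calc |Tbell Adm Q C α u x| = |actionCost Q C α u (x, f x)| := by rw [hTf]
      _ ≤ M * W x + α * (m * (β * W x)) :=
        abs_actionCost_le hα hm (hCW x _ (hf x).1) hum (hW_int x _ (hf x).1) hW_le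
      _ = (M + α * (m * β)) * W x := by ring
  exact ⟨lowerSemicontinuous_sInf_image hAusc hAne hAcomp hcost,
    (WNorm_lt_top_iff hW).2 ⟨_, hT_bound⟩, fun x ↦ ⟨f x, (hf x).1, hTf x⟩,
    f, hf_meas, fun x ↦ (hf x).1, hTf⟩

end Bellman

/-- Under the growth conditions (GC) and the compactness-continuity conditions
(CC), for every lower semicontinuous `u` of finite `W`-norm, `Tu` is lower
semicontinuous of finite `W`-norm, the infimum defining `Tu(x)` is attained for
every `x`, and there is a measurable selector `f` with `Tu = T_f u`. -/
theorem Tbell_lsc_and_selector {X A : Type*}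
    [MetricSpace X] [PolishSpace X] [MeasurableSpace X] [BorelSpace X]
    [MetricSpace A] [PolishSpace A] [MeasurableSpace A] [BorelSpace A]
    (Adm : X → Set A) (hAne : ∀ x, (Adm x).Nonempty)
    (hKmeas : MeasurableSet {p : X × A | p.2 ∈ Adm p.1})
    (Q : Kernel (X × A) X) [IsMarkovKernel Q]
    (C : X × A → ℝ) (hCmeas : Measurable C)
    (α : ℝ) (hα0 : 0 < α) (hα1 : α < 1)
    (M β : ℝ) (hM : 0 < M) (hβ : 1 < β)
    (W : X → ℝ) (hWmeas : Measurable W) (hW1 : ∀ x, 1 ≤ W x)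
    (hCW : ∀ x, ∀ a ∈ Adm x, |C (x, a)| ≤ M * W x)
    (hQW : ∀ x, ∀ a ∈ Adm x,
      ∫⁻ y, ENNReal.ofReal (W y) ∂(Q (x, a)) ≤ ENNReal.ofReal (β * W x))
    (hγ : α * β < 1)
    (hAcomp : ∀ x, IsCompact (Adm x))
    (hAusc : ∀ x, ∀ U : Set A, IsOpen U → Adm x ⊆ U → ∀ᶠ x' in 𝓝 x, Adm x' ⊆ U)
    (hClsc : LowerSemicontinuousOn C {p : X × A | p.2 ∈ Adm p.1})
    (hQweak : ∀ g : X → ℝ, Continuous g → (∃ b, ∀ y, |g y| ≤ b) →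
      ContinuousOn (fun p : X × A => ∫ y, g y ∂(Q p)) {p : X × A | p.2 ∈ Adm p.1})
    (hWcont : Continuous W)
    (hQWcont : ContinuousOn (fun p : X × A => ∫ y, W y ∂(Q p))
      {p : X × A | p.2 ∈ Adm p.1})
    (u : X → ℝ) (hu : LowerSemicontinuous u) (huW : WNorm W u < ⊤) :
    LowerSemicontinuous (Tbell Adm Q C α u) ∧
    WNorm W (Tbell Adm Q C α u) < ⊤ ∧
    (∀ x, ∃ a ∈ Adm x,
      Tbell Adm Q C α u x = C (x, a) + α * ∫ y, u y ∂(Q (x, a))) ∧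
    ∃ f : X → A, Measurable f ∧ (∀ x, f x ∈ Adm x) ∧
      ∀ x, Tbell Adm Q C α u x = C (x, f x) + α * ∫ y, u y ∂(Q (x, f x)) := by
  exact Tbell_lsc_and_selector_general hAne hAcomp (.of_forall_isOpen hAusc) hα0.le
    (zero_le_one.trans hβ.le) (fun x ↦ zero_lt_one.trans_le (hW1 x)) hCW hQW hClsc
    (fun g ↦ hQweak g g.continuous ⟨‖g‖, g.norm_coe_le_norm⟩) hWcont hQWcont hu huW
end

section
/- Assume the growth conditions (GC) and the compactness-continuity conditions (CC). Let g₀ be a measurable selector, v₀ := V_{g₀}, and let g₁ be a measurable selector with T(v₀^e) = T_{g₁}(v₀^e), where v₀^e is the lower semicontinuous envelope of v₀. Then v₀^e ≥ T(v₀^e) ≥ V_{g₁} pointwise on X; in particular the improvement policy g₁ satisfies V_{g₁} ≤ v₀^e ≤ V_{g₀}. -/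
open MeasureTheory ProbabilityTheory Filter Topology
open scoped ENNReal

/-- The lower semicontinuous envelope of `u : X → ℝ`, computed in the extended
reals: `uᵉ(x) = sup_{r>0} inf_{y ∈ B_r(x)} u(y)`. -/
noncomputable def lscEnvE {X : Type*} [MetricSpace X] (u : X → ℝ) (x : X) : EReal :=
  ⨆ r ∈ Set.Ioi (0 : ℝ), ⨅ y ∈ Metric.ball x r, (u y : EReal)

/-!
The envelope `v₀ᵉ` is the largest lower semicontinuous function below `v₀`. A nonnegative lower
semicontinuous function is an increasing limit of bounded continuous ones, so its integral against
a weakly continuous kernel is lower semicontinuous; adding a multiple of the continuous weight `W`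
extends this to `v₀ᵉ`. Minimizing over the compact sets `A(x)` then shows that `T(v₀ᵉ)` is lower
semicontinuous. Since `T(v₀ᵉ) ≤ T_{g₀} v₀ᵉ ≤ T_{g₀} v₀ = v₀`, maximality gives `T(v₀ᵉ) ≤ v₀ᵉ`.

Consequently `w = V_{g₁} - v₀ᵉ` satisfies `w x ≤ α ∫ w dQ(·|x, g₁ x)`. Starting from `w ≤ c W` and
iterating, `w ≤ (αβ)ⁿ c W` for all `n`, whence `V_{g₁} ≤ v₀ᵉ`; applying `T_{g₁}` to both sides
gives `V_{g₁} ≤ T(v₀ᵉ)`.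
-/

open scoped NNReal BoundedContinuousFunction

/-- The relation `e = uᵉ`: the real function `e` is the lower semicontinuous envelope of `u`.
It holds for no real-valued `e` when the envelope takes the value `-∞`. -/
def IsLscEnvelope {X : Type*} [MetricSpace X] (u e : X → ℝ) : Prop :=
  ∀ x, (e x : EReal) = lscEnvE u x

theorem lscEnvE_eq_liminf {X : Type*} [MetricSpace X] (u : X → ℝ) (x : X) :
    lscEnvE u x = liminf (fun y => (u y : EReal)) (𝓝 x) :=
  Metric.nhds_basis_ball.liminf_eq_iSup_iInf.symm

namespace IsLscEnvelope

variable {X : Type*} [MetricSpace X] {u e : X → ℝ}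

theorem le (he : IsLscEnvelope u e) (x : X) : e x ≤ u x := by
  rw [← EReal.coe_le_coe_iff, he]
  exact iSup₂_le fun r hr => iInf₂_le x (Metric.mem_ball_self hr)

theorem le_of_eventually_le (he : IsLscEnvelope u e) {x : X} {c : ℝ}
    (hc : ∀ᶠ y in 𝓝 x, c ≤ u y) : c ≤ e x := by
  rw [← EReal.coe_le_coe_iff, he, lscEnvE_eq_liminf]
  exact le_liminf_of_le (by isBoundedDefault) (hc.mono fun _ => EReal.coe_le_coe)

theorem eventually_lt (he : IsLscEnvelope u e) {x : X} {c : ℝ} (hc : c < e x) :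
    ∀ᶠ y in 𝓝 x, c < u y := by
  rw [← EReal.coe_lt_coe_iff, he, lscEnvE_eq_liminf] at hc
  exact (eventually_lt_of_lt_liminf hc).mono fun _ => EReal.coe_lt_coe_iff.1

theorem lowerSemicontinuous (he : IsLscEnvelope u e) : LowerSemicontinuous e := by
  intro x c hc
  obtain ⟨d, hcd, hde⟩ := exists_between hc
  filter_upwards [(he.eventually_lt hde).eventually_nhds] with y hy
  exact hcd.trans_le (he.le_of_eventually_le (hy.mono fun _ => le_of_lt))

theorem le_of_lowerSemicontinuous (he : IsLscEnvelope u e) {f : X → ℝ}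
    (hf : LowerSemicontinuous f) (hfu : ∀ x, f x ≤ u x) (x : X) : f x ≤ e x :=
  le_of_forall_lt_imp_le_of_dense fun c hc =>
    he.le_of_eventually_le ((hf x c hc).mono fun y hy => hy.le.trans (hfu y))

end IsLscEnvelope

section Berge

variable {X A : Type*} [TopologicalSpace X] [TopologicalSpace A] {S : X → Set A} {x : X}

theorem eventually_forall_mem_of_upperHemicontinuousAt (hS : UpperHemicontinuousAt S x)
    (hSx : IsCompact (S x)) {p : X × A → Prop}
    (hp : ∀ a ∈ S x, ∀ᶠ q in 𝓝[{q : X × A | q.2 ∈ S q.1}] (x, a), p q) :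
    ∀ᶠ x' in 𝓝 x, ∀ a ∈ S x', p (x', a) := by
  have hnhds : {q : X × A | q.2 ∈ S q.1 → p q} ∈ 𝓝 x ×ˢ 𝓝ˢ (S x) :=
    hSx.mem_prod_nhdsSet_of_forall fun a ha => by
      rw [← nhds_prod_eq]
      exact eventually_nhdsWithin_iff.1 (hp a ha)
  obtain ⟨U, hU, V, hV, hUV⟩ := mem_prod_iff.1 hnhds
  filter_upwards [hU, hS V hV] with x' hx' hV' a ha
  exact hUV (Set.mk_mem_prod hx' (subset_of_mem_nhdsSet hV' ha)) ha

variable {β : Type*} {F : X × A → β}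

theorem lowerSemicontinuousOn_section_s13 [Preorder β]
    (hF : LowerSemicontinuousOn F {q : X × A | q.2 ∈ S q.1}) (x : X) :
    LowerSemicontinuousOn (fun a => F (x, a)) (S x) :=
  hF.comp (by fun_prop) fun _ ha => ha

/-- The semicontinuous half of Berge's maximum theorem. -/
theorem lowerSemicontinuous_sInf_image_s13 [ConditionallyCompleteLinearOrder β]
    (hS : UpperHemicontinuous S) (hSc : ∀ x, IsCompact (S x)) (hSne : ∀ x, (S x).Nonempty)
    (hF : LowerSemicontinuousOn F {q : X × A | q.2 ∈ S q.1}) :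
    LowerSemicontinuous fun x => sInf ((fun a => F (x, a)) '' S x) := by
  have isLeast_image (x : X) :
      ∃ a ∈ S x, IsLeast ((fun a => F (x, a)) '' S x) (F (x, a)) := by
    obtain ⟨a, ha, hmin⟩ :=
      (lowerSemicontinuousOn_section_s13 hF x).exists_isMinOn (hSne x) (hSc x)
    exact ⟨a, ha, ⟨a, ha, rfl⟩, Set.forall_mem_image.2 hmin⟩
  intro x c hc
  have lt_of_mem : ∀ a ∈ S x, c < F (x, a) := fun a ha =>
    let ⟨_, _, hleast⟩ := isLeast_image x
    hc.trans_le (csInf_le ⟨_, hleast.2⟩ ⟨a, ha, rfl⟩)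
  filter_upwards [eventually_forall_mem_of_upperHemicontinuousAt (hS x) (hSc x)
    fun a ha => hF (x, a) ha c (lt_of_mem a ha)] with x' hx'
  obtain ⟨a, ha, hleast⟩ := isLeast_image x'
  exact hleast.csInf_eq ▸ hx' a ha

end Berge

section LipschitzMinorant

variable {X : Type*} [PseudoEMetricSpace X] {f : X → ℝ≥0∞}

/-- The Pasch–Hausdorff regularization of `f` truncated at `n`: the largest `n`-Lipschitz function
below `min f n`. As `n` grows these increase to `f` when `f` is lower semicontinuous. -/
noncomputable def lipschitzMinorant (f : X → ℝ≥0∞) (n : ℕ) (x : X) : ℝ≥0∞ :=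
  ⨅ y, min (f y) n + n * edist x y

theorem lipschitzMinorant_le_min (f : X → ℝ≥0∞) (n : ℕ) (x : X) :
    lipschitzMinorant f n x ≤ min (f x) n :=
  (iInf_le _ x).trans_eq (by simp)

theorem continuous_lipschitzMinorant (f : X → ℝ≥0∞) (n : ℕ) :
    Continuous (lipschitzMinorant f n) := by
  refine continuous_of_le_add_edist n (ENNReal.natCast_ne_top n) fun x x' => ?_
  rw [lipschitzMinorant, lipschitzMinorant, ENNReal.iInf_add]
  refine iInf_mono fun y => ?_
  calc min (f y) n + n * edist x y
      ≤ min (f y) n + n * (edist x x' + edist x' y) := by gcongr; exact edist_triangle x x' y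
    _ = min (f y) n + n * edist x' y + n * edist x x' := by ring

theorem monotone_lipschitzMinorant (f : X → ℝ≥0∞) : Monotone (lipschitzMinorant f) :=
  fun m n hmn x => iInf_mono fun y => by gcongr

theorem iSup_lipschitzMinorant (hf : LowerSemicontinuous f) (x : X) :
    ⨆ n, lipschitzMinorant f n x = f x := by
  refine le_antisymm (iSup_le fun n => (lipschitzMinorant_le_min f n x).trans (min_le_left _ _))
    (le_of_forall_lt_imp_le_of_dense fun c hc => ?_)
  obtain ⟨r, hr, hball⟩ := Metric.nhds_basis_eball.eventually_iff.1 (hf x c hc)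
  obtain ⟨k, hk⟩ := ENNReal.exists_nat_mul_gt hr.ne' hc.ne_top
  obtain ⟨l, hl⟩ := ENNReal.exists_nat_gt hc.ne_top
  refine le_iSup_of_le (max k l) (le_iInf fun y => ?_)
  rcases lt_or_ge (edist y x) r with hy | hy
  · refine le_add_right (le_min (hball hy).le (hl.le.trans ?_))
    exact_mod_cast le_max_right k l
  · rw [edist_comm] at hy
    refine le_add_left (hk.le.trans ?_)
    gcongr
    exact le_max_left k l

theorem exists_boundedContinuous_monotone_iSup_eq (hf : LowerSemicontinuous f) :
    ∃ g : ℕ → X →ᵇ ℝ≥0,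
      (∀ x, Monotone fun n => g n x) ∧ ∀ x, ⨆ n, (g n x : ℝ≥0∞) = f x := by
  have le_natCast (n : ℕ) (x : X) : lipschitzMinorant f n x ≤ n :=
    (lipschitzMinorant_le_min f n x).trans (min_le_right _ _)
  have ne_top (n : ℕ) (x : X) : lipschitzMinorant f n x ≠ ∞ :=
    ne_top_of_le_ne_top (ENNReal.natCast_ne_top n) (le_natCast n x)
  have toNNReal_le (n : ℕ) (x : X) : (lipschitzMinorant f n x).toNNReal ≤ n :=
    (ENNReal.toNNReal_mono (ENNReal.natCast_ne_top n) (le_natCast n x)).trans_eq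
      (ENNReal.toNNReal_natCast n)
  let g (n : ℕ) : X →ᵇ ℝ≥0 :=
    .mkOfBound ⟨fun x => (lipschitzMinorant f n x).toNNReal,
      ENNReal.continuousOn_toNNReal.comp_continuous (continuous_lipschitzMinorant f n) (ne_top n)⟩
      n fun x y => abs_sub_le_of_nonneg_of_le (NNReal.coe_nonneg _)
        (mod_cast toNNReal_le n x) (NNReal.coe_nonneg _) (mod_cast toNNReal_le n y)
  have coe_g (n : ℕ) (x : X) : (g n x : ℝ≥0∞) = lipschitzMinorant f n x :=
    ENNReal.coe_toNNReal (ne_top n x)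
  refine ⟨g, fun x m n hmn => ?_, fun x => ?_⟩
  · exact ENNReal.toNNReal_mono (ne_top n x) (monotone_lipschitzMinorant f hmn x)
  · simp only [coe_g, iSup_lipschitzMinorant hf]

end LipschitzMinorant

section WeakContinuity

variable {X : Type*} [PseudoEMetricSpace X] [MeasurableSpace X] [OpensMeasurableSpace X]

theorem lowerSemicontinuous_lintegral_finiteMeasure {f : X → ℝ≥0∞} (hf : LowerSemicontinuous f) :
    LowerSemicontinuous fun μ : FiniteMeasure X => ∫⁻ x, f x ∂μ := by
  obtain ⟨g, g_mono, iSup_g⟩ := exists_boundedContinuous_monotone_iSup_eq hf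
  have lintegral_eq_iSup (μ : FiniteMeasure X) : ∫⁻ x, f x ∂μ = ⨆ n, ∫⁻ x, g n x ∂μ := by
    rw [← lintegral_iSup (fun n => by fun_prop) fun m n hmn x =>
      ENNReal.coe_le_coe.2 (g_mono x hmn)]
    simp only [iSup_g]
  simp only [lintegral_eq_iSup]
  exact lowerSemicontinuous_iSup fun n =>
    (FiniteMeasure.continuous_lintegral_boundedContinuousFunction (g n)).lowerSemicontinuous

variable {P : Type*} [TopologicalSpace P] {μ : P → Measure X} [∀ p, IsFiniteMeasure (μ p)]
  {K : Set P} {f w : X → ℝ}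

theorem lowerSemicontinuousOn_integral_of_nonneg
    (hμ : ∀ g : X →ᵇ ℝ, ContinuousOn (fun p => ∫ x, g x ∂μ p) K)
    (hf : LowerSemicontinuous f) (hf_nonneg : 0 ≤ f) (hf_int : ∀ p ∈ K, Integrable f (μ p)) :
    LowerSemicontinuousOn (fun p => ∫ x, f x ∂μ p) K := by
  let ν (p : P) : FiniteMeasure X := ⟨μ p, inferInstance⟩
  have hν : ContinuousOn ν K := fun p hp =>
    FiniteMeasure.tendsto_iff_forall_integral_tendsto.2 fun g => hμ g p hp
  have hlsc : LowerSemicontinuousOn (fun p => ∫⁻ x, ENNReal.ofReal (f x) ∂μ p) K :=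
    ((lowerSemicontinuous_lintegral_finiteMeasure
      (ENNReal.continuous_ofReal.comp_lowerSemicontinuous hf
        ENNReal.ofReal_mono)).lowerSemicontinuousOn Set.univ).comp hν (Set.mapsTo_univ _ _)
  have ofReal_integral (p : P) (hp : p ∈ K) :
      ENNReal.ofReal (∫ x, f x ∂μ p) = ∫⁻ x, ENNReal.ofReal (f x) ∂μ p :=
    ofReal_integral_eq_lintegral_ofReal (hf_int p hp) (.of_forall hf_nonneg)
  intro p hp c hc
  rcases lt_or_ge c 0 with hc0 | hc0
  · exact .of_forall fun q => hc0.trans_le (integral_nonneg hf_nonneg)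
  · have hc' := (ENNReal.ofReal_lt_ofReal_iff_of_nonneg hc0).2 hc
    rw [ofReal_integral p hp] at hc'
    filter_upwards [hlsc p hp _ hc', self_mem_nhdsWithin] with q hcq hq
    rw [gt_iff_lt, ← ofReal_integral q hq] at hcq
    exact (ENNReal.ofReal_lt_ofReal_iff_of_nonneg hc0).1 hcq

theorem lowerSemicontinuousOn_integral_of_neg_le_s13
    (hμ : ∀ g : X →ᵇ ℝ, ContinuousOn (fun p => ∫ x, g x ∂μ p) K)
    (hw : Continuous w) (hw_int : ∀ p ∈ K, Integrable w (μ p))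
    (hμw : ContinuousOn (fun p => ∫ x, w x ∂μ p) K)
    (hf : LowerSemicontinuous f) (hf_int : ∀ p ∈ K, Integrable f (μ p))
    (hwf : ∀ x, -w x ≤ f x) :
    LowerSemicontinuousOn (fun p => ∫ x, f x ∂μ p) K := by
  have hsum : LowerSemicontinuousOn (fun p => ∫ x, (f x + w x) ∂μ p) K :=
    lowerSemicontinuousOn_integral_of_nonneg hμ (hf.add hw.lowerSemicontinuous)
      (fun x => neg_le_iff_add_nonneg.1 (hwf x)) fun p hp => (hf_int p hp).add (hw_int p hp)
  have integral_eq (p : P) (hp : p ∈ K) :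
      ∫ x, f x ∂μ p = ∫ x, (f x + w x) ∂μ p + -∫ x, w x ∂μ p := by
    rw [integral_add (hf_int p hp) (hw_int p hp), add_neg_cancel_right]
  intro p hp c hc
  simp only [integral_eq p hp] at hc
  filter_upwards [hsum.add hμw.neg.lowerSemicontinuousOn p hp c hc, self_mem_nhdsWithin]
    with q hcq hq
  rwa [integral_eq q hq]

end WeakContinuity

section WeightedNorm

variable {X : Type*} {W u v : X → ℝ}

theorem wNorm_lt_top_iff (hW : ∀ x, 0 < W x) :
    WNorm W u < ⊤ ↔ ∃ m, 0 ≤ m ∧ ∀ x, |u x| ≤ m * W x := by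
  constructor
  · intro hu
    refine ⟨(WNorm W u).toReal, ENNReal.toReal_nonneg, fun x => ?_⟩
    rw [← div_le_iff₀ (hW x), ← ENNReal.ofReal_le_iff_le_toReal hu.ne]
    exact le_iSup (fun x => ENNReal.ofReal (|u x| / W x)) x
  · rintro ⟨m, -, hm⟩
    refine (iSup_le fun x => ?_).trans_lt (ENNReal.ofReal_lt_top (r := m))
    exact ENNReal.ofReal_le_ofReal ((div_le_iff₀ (hW x)).2 (hm x))

theorem wNorm_sub_lt_top (hW : ∀ x, 0 < W x) (hu : WNorm W u < ⊤) (hv : WNorm W v < ⊤) :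
    WNorm W (fun x => u x - v x) < ⊤ := by
  obtain ⟨m, hm0, hm⟩ := (wNorm_lt_top_iff hW).1 hu
  obtain ⟨k, hk0, hk⟩ := (wNorm_lt_top_iff hW).1 hv
  refine (wNorm_lt_top_iff hW).2 ⟨m + k, add_nonneg hm0 hk0, fun x => ?_⟩
  calc |u x - v x| ≤ |u x| + |v x| := abs_sub _ _
    _ ≤ m * W x + k * W x := add_le_add (hm x) (hk x)
    _ = (m + k) * W x := (add_mul m k (W x)).symm

theorem integrable_of_wNorm_lt_top [MeasurableSpace X] {μ : Measure X} (hW : ∀ x, 0 < W x)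
    (hW_int : Integrable W μ) (hu : Measurable u) (huW : WNorm W u < ⊤) : Integrable u μ := by
  obtain ⟨m, -, hm⟩ := (wNorm_lt_top_iff hW).1 huW
  exact (hW_int.const_mul m).mono' hu.aestronglyMeasurable (.of_forall hm)

/-- A continuous minorant `-m W` of `u` is also a minorant of its envelope. -/
theorem IsLscEnvelope.wNorm_lt_top [MetricSpace X] {e : X → ℝ} (he : IsLscEnvelope u e)
    (hW : ∀ x, 0 < W x) (hW_cont : Continuous W) (hu : WNorm W u < ⊤) : WNorm W e < ⊤ := by
  obtain ⟨m, hm0, hm⟩ := (wNorm_lt_top_iff hW).1 hu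
  have neg_le_e : ∀ x, -(m * W x) ≤ e x :=
    he.le_of_lowerSemicontinuous (Continuous.lowerSemicontinuous (by fun_prop))
      fun x => (abs_le.1 (hm x)).1
  exact (wNorm_lt_top_iff hW).2
    ⟨m, hm0, fun x => abs_le.2 ⟨neg_le_e x, (he.le x).trans (abs_le.1 (hm x)).2⟩⟩

end WeightedNorm

section DiscountedComparison

variable {X : Type*} [MeasurableSpace X]

theorem integrable_of_lintegral_ofReal_le {μ : Measure X} {W : X → ℝ} {b : ℝ}
    (hW : Measurable W) (hW0 : 0 ≤ W)
    (hb : ∫⁻ x, ENNReal.ofReal (W x) ∂μ ≤ ENNReal.ofReal b) : Integrable W μ :=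
  ⟨hW.aestronglyMeasurable, (hasFiniteIntegral_iff_ofReal (.of_forall hW0)).2
    (hb.trans_lt ENNReal.ofReal_lt_top)⟩

theorem integral_le_of_lintegral_ofReal_le_s13 {μ : Measure X} {W : X → ℝ} {b : ℝ}
    (hW : Measurable W) (hW0 : 0 ≤ W) (hb0 : 0 ≤ b)
    (hb : ∫⁻ x, ENNReal.ofReal (W x) ∂μ ≤ ENNReal.ofReal b) : ∫ x, W x ∂μ ≤ b := by
  rw [integral_eq_lintegral_of_nonneg_ae (.of_forall hW0) hW.aestronglyMeasurable]
  exact ENNReal.toReal_le_of_le_ofReal hb0 hb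

variable {P : X → Measure X} {W w : X → ℝ} {α β : ℝ}

theorem le_pow_mul_of_le_discounted_integral {c : ℝ} (hα : 0 ≤ α) (hβ : 0 ≤ β) (hc : 0 ≤ c)
    (hW_int : ∀ x, Integrable W (P x)) (hPW : ∀ x, ∫ y, W y ∂P x ≤ β * W x)
    (hw_int : ∀ x, Integrable w (P x)) (hw : ∀ x, w x ≤ α * ∫ y, w y ∂P x)
    (hwW : ∀ x, w x ≤ c * W x) (n : ℕ) (x : X) : w x ≤ (α * β) ^ n * (c * W x) := by
  induction n generalizing x with
  | zero => simpa using hwW x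
  | succ n ih =>
    calc w x ≤ α * ∫ y, w y ∂P x := hw x
      _ ≤ α * ∫ y, (α * β) ^ n * (c * W y) ∂P x := by
        gcongr α * ?_
        exact integral_mono (hw_int x) (((hW_int x).const_mul c).const_mul _) ih
      _ = α * ((α * β) ^ n * (c * ∫ y, W y ∂P x)) := by
        rw [integral_const_mul, integral_const_mul]
      _ ≤ α * ((α * β) ^ n * (c * (β * W x))) := by
        gcongr
        exact hPW x
      _ = (α * β) ^ (n + 1) * (c * W x) := by ring

theorem nonpos_of_le_discounted_integral (hα : 0 ≤ α) (hβ : 0 ≤ β) (hαβ : α * β < 1)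
    (hW : ∀ x, 0 < W x) (hW_int : ∀ x, Integrable W (P x))
    (hPW : ∀ x, ∫ y, W y ∂P x ≤ β * W x) (hwW : WNorm W w < ⊤)
    (hw_int : ∀ x, Integrable w (P x)) (hw : ∀ x, w x ≤ α * ∫ y, w y ∂P x) (x : X) :
    w x ≤ 0 := by
  obtain ⟨c, hc, hcW⟩ := (wNorm_lt_top_iff hW).1 hwW
  have htendsto : Tendsto (fun n : ℕ => (α * β) ^ n * (c * W x)) atTop (𝓝 0) := by
    simpa using (tendsto_pow_atTop_nhds_zero_of_lt_one (mul_nonneg hα hβ) hαβ).mul_const (c * W x)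
  exact ge_of_tendsto' htendsto fun n =>
    le_pow_mul_of_le_discounted_integral hα hβ hc hW_int hPW hw_int hw
      (fun y => (le_abs_self _).trans (hcW y)) n x

end DiscountedComparison

section PolicyImprovement

variable {X A : Type*} [MeasurableSpace X] [MeasurableSpace A]

/-- The one-step cost `C(x,a) + α ∫ u dQ(·|x,a)` of playing `a` at `x` with terminal cost `u`.
Thus `T_f u(x)` is its value at `(x, f x)`, and `Tu(x)` its infimum over `a ∈ A(x)`. -/
noncomputable def actionValue (Q : Kernel (X × A) X) (C : X × A → ℝ) (α : ℝ) (u : X → ℝ)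
    (p : X × A) : ℝ :=
  C p + α * ∫ y, u y ∂Q p

variable {Adm : X → Set A} {Q : Kernel (X × A) X} {C : X × A → ℝ} {α β : ℝ} {W u v e : X → ℝ}

theorem actionValue_mono (hα : 0 ≤ α) {p : X × A} (hu : Integrable u (Q p))
    (hv : Integrable v (Q p)) (huv : ∀ x, u x ≤ v x) :
    actionValue Q C α u p ≤ actionValue Q C α v p := by
  unfold actionValue
  gcongr C p + α * ?_
  exact integral_mono hu hv huv

theorem le_of_le_actionValue_of_actionValue_le {g : X → A} (hα : 0 ≤ α) (hβ : 0 ≤ β)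
    (hαβ : α * β < 1) (hW : ∀ x, 0 < W x) (hW_int : ∀ x, Integrable W (Q (x, g x)))
    (hQW : ∀ x, ∫ y, W y ∂Q (x, g x) ≤ β * W x)
    (hu : Measurable u) (huW : WNorm W u < ⊤) (hu_le : ∀ x, u x ≤ actionValue Q C α u (x, g x))
    (hv : Measurable v) (hvW : WNorm W v < ⊤) (hv_ge : ∀ x, actionValue Q C α v (x, g x) ≤ v x)
    (x : X) : u x ≤ v x := by
  have hu_int (x : X) := integrable_of_wNorm_lt_top hW (hW_int x) hu huW
  have hv_int (x : X) := integrable_of_wNorm_lt_top hW (hW_int x) hv hvW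
  refine sub_nonpos.1 (nonpos_of_le_discounted_integral (P := fun x => Q (x, g x)) hα hβ hαβ hW
    hW_int hQW (wNorm_sub_lt_top hW huW hvW) (fun x => (hu_int x).sub (hv_int x)) (fun x => ?_) x)
  calc u x - v x ≤ actionValue Q C α u (x, g x) - actionValue Q C α v (x, g x) :=
        sub_le_sub (hu_le x) (hv_ge x)
    _ = α * ∫ y, (u y - v y) ∂Q (x, g x) := by
        rw [integral_sub (hu_int x) (hv_int x), actionValue, actionValue]
        ring

variable [TopologicalSpace A]

theorem tbell_le_actionValue [TopologicalSpace X] {x : X} {a : A} (hAdm : IsCompact (Adm x))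
    (hF : LowerSemicontinuousOn (actionValue Q C α u) {p : X × A | p.2 ∈ Adm p.1})
    (ha : a ∈ Adm x) : Tbell Adm Q C α u x ≤ actionValue Q C α u (x, a) :=
  csInf_le ((lowerSemicontinuousOn_section_s13 hF x).bddBelow_of_isCompact hAdm) ⟨a, ha, rfl⟩

variable [MetricSpace X]

theorem lowerSemicontinuousOn_actionValue [OpensMeasurableSpace X] [IsFiniteKernel Q]
    {K : Set (X × A)} (hα : 0 ≤ α) (hC : LowerSemicontinuousOn C K)
    (hQ : ∀ g : X →ᵇ ℝ, ContinuousOn (fun p => ∫ y, g y ∂Q p) K)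
    (hW : ∀ x, 0 < W x) (hW_cont : Continuous W) (hW_int : ∀ p ∈ K, Integrable W (Q p))
    (hQW_cont : ContinuousOn (fun p => ∫ y, W y ∂Q p) K)
    (hu : LowerSemicontinuous u) (huW : WNorm W u < ⊤) :
    LowerSemicontinuousOn (actionValue Q C α u) K := by
  obtain ⟨m, -, hm⟩ := (wNorm_lt_top_iff hW).1 huW
  have hintegral : LowerSemicontinuousOn (fun p => ∫ y, u y ∂Q p) K :=
    lowerSemicontinuousOn_integral_of_neg_le_s13 hQ (hW_cont.const_mul m)
      (fun p hp => (hW_int p hp).const_mul m)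
      (by simpa only [integral_const_mul] using hQW_cont.const_mul m) hu
      (fun p hp => integrable_of_wNorm_lt_top hW (hW_int p hp) hu.measurable huW)
      fun y => (abs_le.1 (hm y)).1
  exact hC.add ((continuous_const_mul α).comp_lowerSemicontinuousOn hintegral
    (monotone_mul_left_of_nonneg hα))

theorem IsLscEnvelope.tbell_le (he : IsLscEnvelope v e) {g : X → A} (hα : 0 ≤ α)
    (hAdm : UpperHemicontinuous Adm) (hAdm_compact : ∀ x, IsCompact (Adm x))
    (hF : LowerSemicontinuousOn (actionValue Q C α e) {p : X × A | p.2 ∈ Adm p.1})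
    (hg : ∀ x, g x ∈ Adm x) (he_int : ∀ x, Integrable e (Q (x, g x)))
    (hv_int : ∀ x, Integrable v (Q (x, g x)))
    (hv_ge : ∀ x, actionValue Q C α v (x, g x) ≤ v x) (x : X) :
    Tbell Adm Q C α e x ≤ e x := by
  have hT_lsc : LowerSemicontinuous (Tbell Adm Q C α e) :=
    lowerSemicontinuous_sInf_image_s13 hAdm hAdm_compact (fun x => ⟨g x, hg x⟩) hF
  refine he.le_of_lowerSemicontinuous hT_lsc (fun x => ?_) x
  calc Tbell Adm Q C α e x ≤ actionValue Q C α e (x, g x) :=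
        tbell_le_actionValue (hAdm_compact x) hF (hg x)
    _ ≤ actionValue Q C α v (x, g x) := actionValue_mono hα (he_int x) (hv_int x) he.le
    _ ≤ v x := hv_ge x

theorem policy_improvement_general [OpensMeasurableSpace X] [IsFiniteKernel Q]
    (hα : 0 ≤ α) (hβ : 0 ≤ β) (hαβ : α * β < 1)
    (hW : ∀ x, 0 < W x) (hW_cont : Continuous W)
    (hQW : ∀ x, ∀ a ∈ Adm x,
      ∫⁻ y, ENNReal.ofReal (W y) ∂Q (x, a) ≤ ENNReal.ofReal (β * W x))
    (hQW_cont : ContinuousOn (fun p => ∫ y, W y ∂Q p) {p : X × A | p.2 ∈ Adm p.1})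
    (hAdm : UpperHemicontinuous Adm) (hAdm_compact : ∀ x, IsCompact (Adm x))
    (hC : LowerSemicontinuousOn C {p : X × A | p.2 ∈ Adm p.1})
    (hQ : ∀ g : X →ᵇ ℝ, ContinuousOn (fun p => ∫ y, g y ∂Q p) {p : X × A | p.2 ∈ Adm p.1})
    {g₀ g₁ : X → A} (hg₀ : ∀ x, g₀ x ∈ Adm x) (hg₁ : ∀ x, g₁ x ∈ Adm x) {v₀ v₁ : X → ℝ}
    (hv₀ : Measurable v₀) (hv₀W : WNorm W v₀ < ⊤)
    (hv₀_fix : ∀ x, v₀ x = actionValue Q C α v₀ (x, g₀ x))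
    (he : IsLscEnvelope v₀ e)
    (hg₁_imp : ∀ x, Tbell Adm Q C α e x = actionValue Q C α e (x, g₁ x))
    (hv₁ : Measurable v₁) (hv₁W : WNorm W v₁ < ⊤)
    (hv₁_fix : ∀ x, v₁ x = actionValue Q C α v₁ (x, g₁ x)) (x : X) :
    v₁ x ≤ Tbell Adm Q C α e x ∧ Tbell Adm Q C α e x ≤ e x ∧ e x ≤ v₀ x := by
  have hW_int (p : X × A) (hp : p.2 ∈ Adm p.1) : Integrable W (Q p) :=
    integrable_of_lintegral_ofReal_le hW_cont.measurable (fun y => (hW y).le) (hQW p.1 p.2 hp)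
  have integral_W_le (x : X) : ∫ y, W y ∂Q (x, g₁ x) ≤ β * W x :=
    integral_le_of_lintegral_ofReal_le_s13 hW_cont.measurable (fun y => (hW y).le)
      (mul_nonneg hβ (hW x).le) (hQW x _ (hg₁ x))
  have he_meas : Measurable e := he.lowerSemicontinuous.measurable
  have heW : WNorm W e < ⊤ := he.wNorm_lt_top hW hW_cont hv₀W
  have integrable_of_bdd {u : X → ℝ} (hu : Measurable u) (huW : WNorm W u < ⊤) {g : X → A}
      (hg : ∀ x, g x ∈ Adm x) (x : X) : Integrable u (Q (x, g x)) :=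
    integrable_of_wNorm_lt_top hW (hW_int _ (hg x)) hu huW
  have hTe : ∀ x, Tbell Adm Q C α e x ≤ e x :=
    he.tbell_le hα hAdm hAdm_compact
      (lowerSemicontinuousOn_actionValue hα hC hQ hW hW_cont hW_int hQW_cont
        he.lowerSemicontinuous heW)
      hg₀ (integrable_of_bdd he_meas heW hg₀) (integrable_of_bdd hv₀ hv₀W hg₀)
      fun x => (hv₀_fix x).ge
  have hv₁e : ∀ x, v₁ x ≤ e x :=
    le_of_le_actionValue_of_actionValue_le hα hβ hαβ hW (fun x => hW_int _ (hg₁ x))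
      integral_W_le hv₁ hv₁W (fun x => (hv₁_fix x).le) he_meas heW
      fun x => (hg₁_imp x).symm.trans_le (hTe x)
  refine ⟨?_, hTe x, he.le x⟩
  rw [hv₁_fix, hg₁_imp]
  exact actionValue_mono hα (integrable_of_bdd hv₁ hv₁W hg₁ x)
    (integrable_of_bdd he_meas heW hg₁ x) hv₁e

end PolicyImprovement

/-- Under (GC) and (CC), if `g₁` improves on `g₀` through the lower
semicontinuous envelope `v₀ᵉ` of `v₀ = V_{g₀}`, i.e. `T(v₀ᵉ) = T_{g₁}(v₀ᵉ)`,
then `v₀ᵉ ≥ T(v₀ᵉ) ≥ V_{g₁}` pointwise; in particular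
`V_{g₁} ≤ v₀ᵉ ≤ V_{g₀}` (Lemma 1(a)-(c) of the paper). -/
theorem policy_improvement {X A : Type*}
    [MetricSpace X] [PolishSpace X] [MeasurableSpace X] [BorelSpace X]
    [MetricSpace A] [PolishSpace A] [MeasurableSpace A] [BorelSpace A]
    (Adm : X → Set A) (hAne : ∀ x, (Adm x).Nonempty)
    (hKmeas : MeasurableSet {p : X × A | p.2 ∈ Adm p.1})
    (Q : Kernel (X × A) X) [IsMarkovKernel Q]
    (C : X × A → ℝ) (hCmeas : Measurable C)
    (α : ℝ) (hα0 : 0 < α) (hα1 : α < 1)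
    (M β : ℝ) (hM : 0 < M) (hβ : 1 < β)
    (W : X → ℝ) (hWmeas : Measurable W) (hW1 : ∀ x, 1 ≤ W x)
    (hCW : ∀ x, ∀ a ∈ Adm x, |C (x, a)| ≤ M * W x)
    (hQW : ∀ x, ∀ a ∈ Adm x,
      ∫⁻ y, ENNReal.ofReal (W y) ∂(Q (x, a)) ≤ ENNReal.ofReal (β * W x))
    (hγ : α * β < 1)
    (hAcomp : ∀ x, IsCompact (Adm x))
    (hAusc : ∀ x, ∀ U : Set A, IsOpen U → Adm x ⊆ U → ∀ᶠ x' in 𝓝 x, Adm x' ⊆ U)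
    (hClsc : LowerSemicontinuousOn C {p : X × A | p.2 ∈ Adm p.1})
    (hQweak : ∀ g : X → ℝ, Continuous g → (∃ b, ∀ y, |g y| ≤ b) →
      ContinuousOn (fun p : X × A => ∫ y, g y ∂(Q p)) {p : X × A | p.2 ∈ Adm p.1})
    (hWcont : Continuous W)
    (hQWcont : ContinuousOn (fun p : X × A => ∫ y, W y ∂(Q p))
      {p : X × A | p.2 ∈ Adm p.1})
    (g₀ : X → A) (hg₀ : Measurable g₀) (hg₀sel : ∀ x, g₀ x ∈ Adm x)
    (v₀ : X → ℝ) (hv₀meas : Measurable v₀) (hv₀W : WNorm W v₀ < ⊤)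
    (hv₀fix : ∀ x, v₀ x = C (x, g₀ x) + α * ∫ y, v₀ y ∂(Q (x, g₀ x)))
    (e : X → ℝ) (hE : ∀ x, (e x : EReal) = lscEnvE v₀ x)
    (g₁ : X → A) (hg₁ : Measurable g₁) (hg₁sel : ∀ x, g₁ x ∈ Adm x)
    (hg₁imp : ∀ x, Tbell Adm Q C α e x = C (x, g₁ x) + α * ∫ y, e y ∂(Q (x, g₁ x)))
    (v₁ : X → ℝ) (hv₁meas : Measurable v₁) (hv₁W : WNorm W v₁ < ⊤)
    (hv₁fix : ∀ x, v₁ x = C (x, g₁ x) + α * ∫ y, v₁ y ∂(Q (x, g₁ x))) :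
    ∀ x, v₁ x ≤ Tbell Adm Q C α e x ∧ Tbell Adm Q C α e x ≤ e x ∧ e x ≤ v₀ x := by
  exact policy_improvement_general hα0.le (zero_le_one.trans hβ.le) hγ
    (fun x => one_pos.trans_le (hW1 x)) hWcont hQW hQWcont (.of_forall_isOpen hAusc) hAcomp hClsc
    (fun g => hQweak g g.continuous ⟨‖g‖, g.norm_coe_le_norm⟩) hg₀sel hg₁sel hv₀meas hv₀W hv₀fix
    hE hg₁imp hv₁meas hv₁W hv₁fix
end
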